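/- Let p₁₀, p₀₁ and p₅₀, p₄₁, p₃₂, p₂₃, p₁₄, p₀₅ be real numbers with p₁₀² + p₀₁² ≠ 0, and set P₁(θ) = p₁₀ cos θ + p₀₁ sin θ and P₅(θ) = Σ_{i+j=5} p_{ij} cosⁱθ sinʲθ. Then the equation dr/dθ = r(P₁(θ) r + P₅(θ) r⁵) has a center at r = 0 if and only if p₀₁(5p₅₀ + p₃₂ + p₁₄) = p₁₀(5p₀₅ + p₂₃ + p₄₁), p₁₀³(p₂₃ + 10p₀₅) − 3p₁₀²p₀₁(2p₁₄ + p₃₂) + 3p₁₀p₀₁²(p₂₃ + 2p₄₁) − p₀₁³(p₃₂ + 10p₅₀) = 0, and p₅₀p₀₁⁵ − p₄₁p₀₁⁴p₁₀ + p₃₂p₀₁³p₁₀² − p₂₃p₀₁²p₁₀³ + p₁₄p₀₁p₁₀⁴ − p₀₅p₁₀⁵ = 0. -/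

import Mathlib

open Real

/-- A 2π-periodic scalar ODE `dr/dθ = F θ r` has a center at `r = 0` if every solution
with `|r 0|` sufficiently small is defined on `[0, 2π]` and satisfies `r (2π) = r 0`. -/
def HasCenterAtZero (F : ℝ → ℝ → ℝ) : Prop :=
  ∃ ε > (0 : ℝ), ∀ r : ℝ → ℝ, |r 0| < ε →
    (∀ θ ∈ Set.Icc (0 : ℝ) (2 * Real.pi), HasDerivAt r (F θ (r θ)) θ) →
    r (2 * Real.pi) = r 0

/-!
Write `P₁ θ = k sin (t₀ - θ)`. The equation has a center exactly when `P₅` is odd about `t₀`. If it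
is, the equation is invariant under the reflections about `t₀` and `t₀ + π`, and composing the two
takes the value of a solution at `0` to its value at `2π`.

Conversely let `A` be the primitive of `P₁` vanishing at `0`. A solution returning to its initial
value `x` satisfies `(1 / r + A)' = -P₅ r ^ 4`, so `r` is close to `x / (1 - x A)` and
`P₅ (1 - x A) ^ (-4)` integrates to `O (x ^ 6)` over a period. Expanding in powers of `x`, the
moments `∫ P₅ A ^ k` vanish for `k ≤ 5`, hence `P₅` is orthogonal to every polynomial of degree at
most `5` in `cos (θ - t₀)`. Its own even part about `t₀` is such a polynomial and so is zero.

Finally, this even part is determined by the values of the quintic form `P₅`, of its Laplacian and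
of its bilaplacian on the zero line of `P₁`, which are the three expressions in the theorem.
-/

open Asymptotics Filter Function Polynomial Set Topology
open scoped NNReal

section Asymptotics

theorem X_pow_dvd_of_isBigO {𝕜 : Type*} [NormedField 𝕜] {l : Filter 𝕜} [l.NeBot]
    (hl : l ≤ 𝓝[≠] 0) {p : 𝕜[X]} {m : ℕ} (hp : (fun x => p.eval x) =O[l] (· ^ m)) :
    X ^ m ∣ p := by
  induction m with
  | zero => simp
  | succ m ih =>
    have h0 : Tendsto (fun x : 𝕜 => x) l (𝓝 0) := hl.trans nhdsWithin_le_nhds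
    have hne : ∀ᶠ x in l, x ≠ 0 := hl eventually_mem_nhdsWithin
    have hpow : (fun x : 𝕜 => x ^ (m + 1)) =O[l] (· ^ m) := by
      simpa [pow_succ] using (isBigO_refl (fun x : 𝕜 => x ^ m) l).mul (h0.isBigO_one 𝕜)
    obtain ⟨q, rfl⟩ := ih (hp.trans hpow)
    have hq : (fun x => q.eval x) =O[l] fun x => x := by
      refine ((isBigO_refl (fun x : 𝕜 => (x ^ m)⁻¹) l).mul hp).congr' ?_ ?_ <;>
        filter_upwards [hne] with x hx
      · simp [hx]
      · rw [pow_succ, inv_mul_cancel_left₀ (pow_ne_zero m hx)]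
    have hq0 : q.eval 0 = 0 :=
      tendsto_nhds_unique (q.continuous.continuousAt.tendsto.comp h0) (hq.trans_tendsto h0)
    rw [pow_succ]
    exact mul_dvd_mul_left _ (X_dvd_iff.2 (by rwa [coeff_zero_eq_eval_zero]))

theorem isBigO_inv_one_sub_pow_sub_sum (n m : ℕ) :
    (fun y : ℝ => (1 - y)⁻¹ ^ (n + 1) - ∑ k ∈ Finset.range m, (Nat.choose (n + k) n : ℝ) * y ^ k)
      =O[𝓝 0] (· ^ m) := by
  have h := (Complex.one_div_one_sub_pow_hasFPowerSeriesOnBall_zero n).hasFPowerSeriesAt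
    |>.isBigO_sub_partialSum_pow m
  have hcast : Tendsto Complex.ofReal (𝓝 0) (𝓝 0) := by
    simpa using Complex.continuous_ofReal.tendsto 0
  refine ((h.comp_tendsto hcast).norm_norm.congr (fun y => ?_) (fun y => by simp)).of_norm_norm
  rw [← Complex.norm_real]
  simp [FormalMultilinearSeries.partialSum, mul_comm]

theorem isBigO_pow_sub_pow_mul {α : Type*} {l : Filter α} {ρ σ z g : α → ℝ}
    (hσρ : ∀ᶠ a in l, σ a - ρ a = σ a * ρ a * z a) (hρ : (fun a => ρ a - 1) =O[l] g)
    (hσ : (fun a => σ a - 1) =O[l] g) (hg : Tendsto g l (𝓝 0)) (n : ℕ) :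
    (fun a => σ a ^ n - ρ a ^ n * (1 + n * z a)) =O[l] fun a => z a * g a := by
  let Φ : ℝ × ℝ → ℝ := fun w =>
    w.1 * w.2 * ∑ i ∈ Finset.range n, w.1 ^ i * w.2 ^ (n - 1 - i) - n * w.2 ^ n
  have hlim {f : α → ℝ} (hf : (fun a => f a - 1) =O[l] g) : Tendsto f l (𝓝 1) :=
    tendsto_sub_nhds_zero_iff.1 (hf.trans_tendsto hg)
  have hΦ : (fun a => Φ (σ a, ρ a)) =O[l] g := by
    have hd : DifferentiableAt ℝ Φ (1, 1) := by fun_prop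
    have hΦ₁ : Φ (1, 1) = 0 := by simp [Φ]
    have h := hd.isBigO_sub.comp_tendsto ((hlim hσ).prodMk_nhds (hlim hρ))
    simp only [comp_def, hΦ₁, sub_zero, Prod.mk_sub_mk] at h
    exact h.trans (hσ.prod_left hρ)
  refine ((isBigO_refl z l).mul hΦ).congr' ?_ .rfl
  filter_upwards [hσρ] with a ha
  have hgeom := geom_sum₂_mul (σ a) (ρ a) n
  rw [ha] at hgeom
  linear_combination hgeom

variable {α E : Type*} [NormedAddCommGroup E] {l : Filter α} {a b : ℝ}

theorem isBigO_one_comp_snd {X : Type*} [TopologicalSpace X] {f : X → E}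
    (hf : Continuous f) {K : Set X} (hK : IsCompact K) :
    (fun z : α × X => f z.2) =O[l ×ˢ 𝓟 K] fun _ => (1 : ℝ) := by
  obtain ⟨C, hC⟩ := hK.exists_bound_of_continuousOn hf.continuousOn
  refine .of_bound C (eventually_prod_principal_iff.2 (.of_forall fun _ x hx => ?_))
  simpa using hC x hx

variable [NormedSpace ℝ E] {f f' : α → ℝ → E} {g : α → ℝ}

theorem isBigO_of_hasDerivAt (hf : ∀ᶠ x in l, ∀ t ∈ Icc a b, HasDerivAt (f x) (f' x t) t)
    (hfa : ∀ᶠ x in l, f x a = 0)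
    (hf' : (fun z : α × ℝ => f' z.1 z.2) =O[l ×ˢ 𝓟 (Icc a b)] fun z => g z.1) :
    (fun z : α × ℝ => f z.1 z.2) =O[l ×ˢ 𝓟 (Icc a b)] fun z => g z.1 := by
  obtain ⟨C, hC, hbound⟩ := hf'.exists_nonneg
  refine .of_bound (C * (b - a)) (eventually_prod_principal_iff.2 ?_)
  filter_upwards [hf, hfa, eventually_prod_principal_iff.1 hbound.bound] with x hx hxa hxb t ht
  have h := norm_image_sub_le_of_norm_deriv_le_segment'
    (fun s hs => (hx s hs).hasDerivWithinAt) (fun s hs => hxb s (Ico_subset_Icc_self hs)) t ht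
  rw [hxa, sub_zero] at h
  calc ‖f x t‖ ≤ C * ‖g x‖ * (t - a) := h
    _ ≤ C * ‖g x‖ * (b - a) := by gcongr; exact ht.2
    _ = C * (b - a) * ‖g x‖ := by ring

variable {A : ℝ → ℝ} {s : Set ℝ}

theorem tendsto_fst_nhdsGT :
    Tendsto (fun z : ℝ × ℝ => z.1) (𝓝[>] 0 ×ˢ 𝓟 s) (𝓝 0) :=
  tendsto_fst.mono_right nhdsWithin_le_nhds

theorem isBigO_mul_comp_snd (hA : Continuous A) (hs : IsCompact s) :
    (fun z : ℝ × ℝ => z.1 * A z.2) =O[𝓝[>] 0 ×ˢ 𝓟 s] fun z => z.1 := by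
  simpa using (isBigO_refl (fun z : ℝ × ℝ => z.1) _).mul (isBigO_one_comp_snd hA hs)

theorem isBigO_inv_one_sub_mul_pow_sub_sum (hA : Continuous A) (hs : IsCompact s) (n m : ℕ) :
    (fun z : ℝ × ℝ => (1 - z.1 * A z.2)⁻¹ ^ (n + 1) -
        ∑ k ∈ Finset.range m, (Nat.choose (n + k) n : ℝ) * (z.1 * A z.2) ^ k)
      =O[𝓝[>] 0 ×ˢ 𝓟 s] fun z => z.1 ^ m := by
  have hzA := isBigO_mul_comp_snd hA hs
  exact ((isBigO_inv_one_sub_pow_sub_sum n m).comp_tendsto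
    (hzA.trans_tendsto tendsto_fst_nhdsGT)).trans (hzA.pow m)

end Asymptotics

section Reversible

theorem odd_comp_sub_zsmul {α β : Type*} [AddCommGroup α] [Neg β] {f : α → β} {a : α}
    (hodd : f.Odd) (hper : Periodic f (2 • a)) (m : ℤ) : Function.Odd fun v => f (v - m • a) := by
  intro v
  dsimp only
  rw [show -v - m • a = -(v - m • a + m • 2 • a) by rw [smul_comm]; abel, hodd, hper.zsmul m]

variable {E : Type*} [NormedAddCommGroup E] [NormedSpace ℝ E] {F : ℝ → E → E} {c a : ℝ}

theorem exists_lipschitzOnWith_of_contDiff (hF : ContDiff ℝ 1 ↿F) {s : Set ℝ} {k : Set E}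
    (hs : IsCompact s) (hk : IsCompact k) : ∃ K, ∀ t ∈ s, LipschitzOnWith K (F t) k := by
  obtain ⟨K, hK⟩ := LocallyLipschitzOn.exists_lipschitzOnWith_of_compact (hs.prod hk)
    hF.locallyLipschitz.locallyLipschitzOn
  refine ⟨K, fun t ht => ?_⟩
  simpa using! hK.comp (LipschitzWith.prodMk_left t).lipschitzOnWith fun y hy => ⟨ht, hy⟩

theorem apply_add_eq_apply_sub_of_odd (hF : ContDiff ℝ 1 ↿F)
    (hodd : Function.Odd fun v => F (c + v)) (ha : 0 ≤ a) {r : ℝ → E}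
    (hr : ∀ t ∈ Icc (c - a) (c + a), HasDerivAt r (F t (r t)) t) :
    r (c + a) = r (c - a) := by
  have hadd {v} (hv : v ∈ Icc 0 a) : c + v ∈ Icc (c - a) (c + a) :=
    ⟨by linarith [hv.1], by linarith [hv.2]⟩
  have hsub {v} (hv : v ∈ Icc 0 a) : c - v ∈ Icc (c - a) (c + a) :=
    ⟨by linarith [hv.2], by linarith [hv.1]⟩
  have hderiv_add {v} (hv : v ∈ Icc 0 a) :
      HasDerivAt (fun v => r (c + v)) (F (c + v) (r (c + v))) v :=
    (hr _ (hadd hv)).comp_const_add c v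
  have hderiv_sub {v} (hv : v ∈ Icc 0 a) :
      HasDerivAt (fun v => r (c - v)) (F (c + v) (r (c - v))) v := by
    have hneg : F (c - v) = -F (c + v) := hodd v
    simpa [hneg] using (hr _ (hsub hv)).comp_const_sub c v
  have hrange : IsCompact (r '' Icc (c - a) (c + a)) :=
    isCompact_Icc.image_of_continuousOn fun t ht => (hr t ht).continuousAt.continuousWithinAt
  obtain ⟨K, hK⟩ := exists_lipschitzOnWith_of_contDiff hF
    (isCompact_Icc (a := c - a) (b := c + a)) hrange
  exact ODE_solution_unique_of_mem_Icc_right (v := fun v => F (c + v))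
    (s := fun _ => r '' Icc (c - a) (c + a))
    (fun v hv => hK _ (hadd (Ico_subset_Icc_self hv)))
    (fun v hv => (hderiv_add hv).continuousAt.continuousWithinAt)
    (fun v hv => (hderiv_add (Ico_subset_Icc_self hv)).hasDerivWithinAt)
    (fun v hv => mem_image_of_mem r (hadd (Ico_subset_Icc_self hv)))
    (fun v hv => (hderiv_sub hv).continuousAt.continuousWithinAt)
    (fun v hv => (hderiv_sub (Ico_subset_Icc_self hv)).hasDerivWithinAt)
    (fun v hv => mem_image_of_mem r (hsub (Ico_subset_Icc_self hv)))
    (by simp) (right_mem_Icc.2 ha)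

theorem hasCenterAtZero_of_odd {F : ℝ → ℝ → ℝ} (hF : ContDiff ℝ 1 ↿F)
    (hper : Periodic F (2 * π)) (hodd : Function.Odd fun v => F (c + v)) : HasCenterAtZero F := by
  have hodd' (m : ℤ) : Function.Odd fun v => F (c - m • π + v) := by
    have h := odd_comp_sub_zsmul (a := π) hodd (by simpa [add_assoc] using! fun v => hper (c + v)) m
    simpa only [add_sub_left_comm, add_comm] using! h
  obtain ⟨m, hm⟩ : ∃ m : ℤ, c - m • π ∈ Ico 0 π := by
    refine ⟨toIcoDiv pi_pos 0 c, ?_⟩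
    rw [self_sub_toIcoDiv_zsmul]
    simpa using toIcoMod_mem_Ico pi_pos 0 c
  have hodd_add_pi : Function.Odd fun v => F (c - m • π + π + v) := by
    simpa [sub_smul, sub_sub_eq_add_sub, add_sub_right_comm] using hodd' (m - 1)
  have hodd_s := hodd' m
  generalize c - m • π = s at hm hodd_s hodd_add_pi
  refine ⟨1, one_pos, fun r _ hr => ?_⟩
  have hfst : r (s + s) = r (s - s) :=
    apply_add_eq_apply_sub_of_odd hF hodd_s hm.1 fun t ht =>
      hr t ⟨by linarith [ht.1], by linarith [ht.2, hm.2]⟩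
  have hsnd : r (s + π + (π - s)) = r (s + π - (π - s)) :=
    apply_add_eq_apply_sub_of_odd hF hodd_add_pi (sub_nonneg.2 hm.2.le) fun t ht =>
      hr t ⟨by linarith [ht.1, hm.1], by linarith [ht.2]⟩
  convert hsnd.trans ((congrArg r (by ring)).trans hfst) using 2 <;> ring

end Reversible

section Existence

theorem exists_hasDerivAt_of_lipschitzWith_of_norm_le {E : Type*} [NormedAddCommGroup E]
    [NormedSpace ℝ E] [CompleteSpace E] {f : ℝ → E → E} {a b t₀ : ℝ} {K L : ℝ≥0}
    (ht₀ : t₀ ∈ Icc a b) (hlip : ∀ t ∈ Icc a b, LipschitzWith K (f t))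
    (hcont : ∀ x, ContinuousOn (f · x) (Icc a b)) (hL : ∀ t ∈ Icc a b, ∀ x, ‖f t x‖ ≤ L) (x₀ : E) :
    ∃ r : ℝ → E, r t₀ = x₀ ∧ ∀ t ∈ Ioo a b, HasDerivAt r (f t (r t)) t := by
  have hmax : 0 ≤ max (b - t₀) (t₀ - a) := le_max_of_le_left (sub_nonneg.2 ht₀.2)
  have hf : IsPicardLindelof f ⟨t₀, ht₀⟩ x₀ (L * (max (b - t₀) (t₀ - a)).toNNReal) 0 L K :=
    ⟨fun t ht => (hlip t ht).lipschitzOnWith, fun x _ => hcont x, fun t ht x _ => hL t ht x,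
      by simp [hmax]⟩
  obtain ⟨r, hr₀, hr⟩ := hf.exists_eq_forall_mem_Icc_hasDerivWithinAt₀
  exact ⟨r, hr₀, fun t ht => (hr t (Ioo_subset_Icc_self ht)).hasDerivAt (Icc_mem_nhds ht.1 ht.2)⟩

/-- `r` solves `r' = F t r` on `[0, T]` with initial value `x`, and stays comparable to `x`; the
factor two is an arbitrary choice. -/
structure IsSolutionNear (F : ℝ → ℝ → ℝ) (T x : ℝ) (r : ℝ → ℝ) : Prop where
  apply_zero : r 0 = x
  hasDerivAt : ∀ t ∈ Icc 0 T, HasDerivAt r (F t (r t)) t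
  mem_Icc : ∀ t ∈ Icc 0 T, r t ∈ Icc (x / 2) (2 * x)

variable {F G : ℝ → ℝ → ℝ} {T : ℝ}

/-- The solution of the equation with `y` clamped to `[x / 2, 2 x]` is too slow to leave this
interval by time `T`, so it never feels the clamp. -/
theorem exists_isSolutionNear_of_norm_le {C x : ℝ} {K : ℝ≥0} (hT : 0 ≤ T)
    (hcont : ∀ y, Continuous (F · y))
    (hlip : ∀ t ∈ Icc (-1) (T + 1), LipschitzOnWith K (F t) (Icc (x / 2) (2 * x))) (hx : 0 < x)
    (hC : ∀ t ∈ Icc (-1) (T + 1), ∀ y ∈ Icc (x / 2) (2 * x), ‖F t y‖ ≤ C) (hxC : C * T ≤ x / 2) :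
    ∃ r, IsSolutionNear F T x r := by
  have hIcc : x / 2 ≤ 2 * x := by linarith
  lift C to ℝ≥0 using
    (norm_nonneg _).trans (hC 0 (by constructor <;> linarith) _ (left_mem_Icc.2 hIcc))
  let clamp (y : ℝ) : ℝ := projIcc (x / 2) (2 * x) hIcc y
  have hclamp (y : ℝ) : clamp y ∈ Icc (x / 2) (2 * x) := (projIcc _ _ hIcc y).2
  obtain ⟨r, hr₀, hr⟩ := exists_hasDerivAt_of_lipschitzWith_of_norm_le
    (f := fun t y => F t (clamp y)) (a := -1) (b := T + 1) (t₀ := 0) (K := K * (1 * 1))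
    ⟨by linarith, by linarith⟩
    (fun t ht => lipschitzOnWith_univ.1 ((hlip t ht).comp
      ((LipschitzWith.subtype_val _).comp (LipschitzWith.projIcc hIcc)).lipschitzOnWith
      fun y _ => hclamp y))
    (fun y => (hcont _).continuousOn) (fun t ht y => hC t ht _ (hclamp y)) x
  have hmem {t : ℝ} (ht : t ∈ Icc 0 T) : t ∈ Ioo (-1) (T + 1) :=
    ⟨by linarith [ht.1], by linarith [ht.2]⟩
  have hbound {t : ℝ} (ht : t ∈ Icc 0 T) : r t ∈ Icc (x / 2) (2 * x) := by
    have h := norm_image_sub_le_of_norm_deriv_le_segment'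
      (fun s hs => (hr s (hmem hs)).hasDerivWithinAt)
      (fun s hs => hC s (Ioo_subset_Icc_self (hmem (Ico_subset_Icc_self hs))) _ (hclamp _)) t ht
    rw [hr₀, sub_zero, norm_eq_abs, abs_le] at h
    have hCt : C * t ≤ C * T := by gcongr; exact ht.2
    exact ⟨by linarith, by linarith⟩
  refine ⟨r, hr₀, fun t ht => ?_, fun t ht => hbound ht⟩
  have hclamp_r : clamp (r t) = r t := congrArg Subtype.val (projIcc_of_mem hIcc (hbound ht))
  simpa only [hclamp_r] using hr t (hmem ht)

theorem eventually_exists_isSolutionNear (hG : ContDiff ℝ 1 ↿G) (hT : 0 ≤ T) :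
    ∀ᶠ x in 𝓝[>] 0, ∃ r, IsSolutionNear (fun t y => y ^ 2 * G t y) T x r := by
  obtain ⟨C, hC⟩ := (isCompact_Icc.prod isCompact_Icc).exists_bound_of_continuousOn
    (s := Icc (-1) (T + 1) ×ˢ Icc (0 : ℝ) 2) hG.continuous.continuousOn
  have hsmall : ∀ᶠ x in 𝓝[>] (0 : ℝ), 8 * C * T * x < 1 :=
    (Continuous.tendsto' (by fun_prop) 0 0 (by simp)).mono_left nhdsWithin_le_nhds
      |>.eventually_lt_const one_pos
  have hF : ContDiff ℝ 1 ↿(fun t y => y ^ 2 * G t y) := (contDiff_snd.pow 2).mul hG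
  filter_upwards [Ioo_mem_nhdsGT one_pos, hsmall] with x ⟨hx, hx₁⟩ hxC
  obtain ⟨K, hK⟩ := exists_lipschitzOnWith_of_contDiff hF (isCompact_Icc (a := -1) (b := T + 1))
    (isCompact_Icc (a := x / 2) (b := 2 * x))
  refine exists_isSolutionNear_of_norm_le (C := (2 * x) ^ 2 * C) hT
    (fun y => hF.continuous.comp (Continuous.prodMk_left y)) hK hx (fun t ht y hy => ?_)
    (by nlinarith)
  have hy₀ : 0 ≤ y := by linarith [hy.1]
  rw [norm_mul, norm_pow, norm_of_nonneg hy₀]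
  gcongr
  · exact hy.2
  · exact hC (t, y) ⟨ht, hy₀, by linarith [hy.2]⟩

variable {r : ℝ → ℝ → ℝ}

theorem eventually_pos_and_solution_mem_Icc
    (hr : ∀ᶠ x in 𝓝[>] 0, IsSolutionNear F T x (r x)) :
    ∀ᶠ z : ℝ × ℝ in 𝓝[>] 0 ×ˢ 𝓟 (Icc 0 T),
      0 < z.1 ∧ r z.1 z.2 ∈ Icc (z.1 / 2) (2 * z.1) := by
  rw [eventually_prod_principal_iff]
  filter_upwards [hr, eventually_mem_nhdsWithin] with x hx hx₀ t ht
  exact ⟨hx₀, hx.mem_Icc t ht⟩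

theorem isBigO_solution (hr : ∀ᶠ x in 𝓝[>] 0, IsSolutionNear F T x (r x)) :
    (fun z : ℝ × ℝ => r z.1 z.2) =O[𝓝[>] 0 ×ˢ 𝓟 (Icc 0 T)] fun z => z.1 := by
  refine .of_bound 2 ?_
  filter_upwards [eventually_pos_and_solution_mem_Icc hr] with z ⟨hz, hrz⟩
  rw [norm_of_nonneg hz.le, norm_of_nonneg (by linarith [hrz.1])]
  exact hrz.2

end Existence

section Necessity

/-- The right-hand side of the generalized Abel equation `r' = r (p r + q r ^ n)`. -/
def abelField (n : ℕ) (p q : ℝ → ℝ) (θ r : ℝ) : ℝ :=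
  r * (p θ * r + q θ * r ^ n)

variable {n : ℕ} {p q A : ℝ → ℝ} {T : ℝ} {r : ℝ → ℝ → ℝ}

theorem hasDerivAt_inv_add_of_abelField {u : ℝ → ℝ} {t : ℝ}
    (hu : HasDerivAt u (abelField (n + 2) p q t (u t)) t) (hu₀ : u t ≠ 0)
    (hA : HasDerivAt A (p t) t) :
    HasDerivAt (fun t => (u t)⁻¹ + A t) (-(q t * u t ^ (n + 1))) t := by
  refine ((hu.inv hu₀).add hA).congr_deriv ?_
  simp only [abelField]
  field

/-- The defect in `1 / r = 1 / x - A`, the solution of the Bernoulli equation `r' = p r ^ 2` with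
`r 0 = x`, where `A` is the primitive of `p` vanishing at `0`. -/
noncomputable def bernoulliDefect (A : ℝ → ℝ) (r : ℝ → ℝ → ℝ) (x t : ℝ) : ℝ :=
  (r x t)⁻¹ - x⁻¹ + A t

section Estimates

variable (hq : Continuous q) (hA : ∀ t, HasDerivAt A (p t) t) (hA₀ : A 0 = 0)
  (hr : ∀ᶠ x in 𝓝[>] 0, IsSolutionNear (abelField (n + 2) p q) T x (r x))

include hr hA

theorem eventually_hasDerivAt_bernoulliDefect : ∀ᶠ x in 𝓝[>] 0, ∀ t ∈ Icc 0 T,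
    HasDerivAt (bernoulliDefect A r x) (-(q t * r x t ^ (n + 1))) t := by
  filter_upwards [hr, eventually_mem_nhdsWithin] with x hx (hx₀ : 0 < x) t ht
  have hpos : 0 < r x t := by linarith [(hx.mem_Icc t ht).1]
  refine ((hasDerivAt_inv_add_of_abelField (hx.hasDerivAt t ht) hpos.ne' (hA t)).sub_const x⁻¹
    ).congr_of_eventuallyEq (.of_forall fun s => ?_)
  simp only [bernoulliDefect]
  ring

theorem eventually_hasDerivAt_bernoulliDefect_add_sq : ∀ᶠ x in 𝓝[>] 0, ∀ t ∈ Icc 0 T,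
    HasDerivAt (fun t => bernoulliDefect A r x t + (n + 1) * x * bernoulliDefect A r x t ^ 2 / 2)
      (-(q t * r x t ^ (n + 1) * (1 + (n + 1) * (x * bernoulliDefect A r x t)))) t := by
  filter_upwards [eventually_hasDerivAt_bernoulliDefect hA hr] with x hx t ht
  refine ((hx t ht).add ((((hx t ht).pow 2).const_mul ((n + 1) * x)).div_const 2)).congr_deriv ?_
  ring

include hq hA₀

theorem isBigO_bernoulliDefect :
    (fun z : ℝ × ℝ => bernoulliDefect A r z.1 z.2)
      =O[𝓝[>] 0 ×ˢ 𝓟 (Icc 0 T)] fun z => z.1 ^ (n + 1) := by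
  refine isBigO_of_hasDerivAt (g := (· ^ (n + 1)))
    (eventually_hasDerivAt_bernoulliDefect hA hr) ?_ ?_
  · filter_upwards [hr] with x hx
    simp [bernoulliDefect, hx.apply_zero, hA₀]
  · simpa using ((isBigO_one_comp_snd hq isCompact_Icc).mul
      ((isBigO_solution hr).pow (n + 1))).neg_left

theorem isBigO_mul_bernoulliDefect :
    (fun z : ℝ × ℝ => z.1 * bernoulliDefect A r z.1 z.2)
      =O[𝓝[>] 0 ×ˢ 𝓟 (Icc 0 T)] fun z => z.1 ^ (n + 2) := by
  simpa [pow_succ'] using (isBigO_refl (fun z : ℝ × ℝ => z.1) _).mul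
    (isBigO_bernoulliDefect hq hA hA₀ hr)

theorem isBigO_div_sub_one :
    (fun z : ℝ × ℝ => r z.1 z.2 / z.1 - 1) =O[𝓝[>] 0 ×ˢ 𝓟 (Icc 0 T)] fun z => z.1 := by
  have hA' : Continuous A := continuous_iff_continuousAt.2 fun t => (hA t).continuousAt
  have hdefect : (fun z : ℝ × ℝ => A z.2 - bernoulliDefect A r z.1 z.2)
      =O[𝓝[>] 0 ×ˢ 𝓟 (Icc 0 T)] fun _ => (1 : ℝ) :=
    (isBigO_one_comp_snd hA' isCompact_Icc).sub <|
      (isBigO_bernoulliDefect hq hA hA₀ hr).trans <|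
        (tendsto_fst_nhdsGT.pow (n + 1)).isBigO_one ℝ
  refine ((isBigO_solution hr).mul hdefect).congr' ?_ (by simp)
  filter_upwards [eventually_pos_and_solution_mem_Icc hr] with z ⟨hz, hrz⟩
  have hpos : 0 < r z.1 z.2 := by linarith [hrz.1]
  simp only [bernoulliDefect]
  field

theorem isBigO_inv_one_sub_pow_sub_div_pow_mul :
    (fun z : ℝ × ℝ => (1 - z.1 * A z.2)⁻¹ ^ (n + 1) -
        (r z.1 z.2 / z.1) ^ (n + 1) * (1 + (n + 1) * (z.1 * bernoulliDefect A r z.1 z.2)))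
      =O[𝓝[>] 0 ×ˢ 𝓟 (Icc 0 T)] fun z => z.1 ^ (n + 3) := by
  have hA' : Continuous A := continuous_iff_continuousAt.2 fun t => (hA t).continuousAt
  have hzA := isBigO_mul_comp_snd hA' (isCompact_Icc (a := 0) (b := T))
  have hσ : (fun z : ℝ × ℝ => (1 - z.1 * A z.2)⁻¹ - 1)
      =O[𝓝[>] 0 ×ˢ 𝓟 (Icc 0 T)] fun z => z.1 := by
    simpa using isBigO_inv_one_sub_mul_pow_sub_sum hA' (isCompact_Icc (a := 0) (b := T)) 0 1
  have hdiff : ∀ᶠ z : ℝ × ℝ in 𝓝[>] 0 ×ˢ 𝓟 (Icc 0 T),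
      (1 - z.1 * A z.2)⁻¹ - r z.1 z.2 / z.1 =
        (1 - z.1 * A z.2)⁻¹ * (r z.1 z.2 / z.1) * (z.1 * bernoulliDefect A r z.1 z.2) := by
    filter_upwards [eventually_pos_and_solution_mem_Icc hr,
      (hzA.trans_tendsto tendsto_fst_nhdsGT).eventually_lt_const one_pos] with z ⟨hz, hrz⟩ hzA₁
    have hpos : 0 < r z.1 z.2 := by linarith [hrz.1]
    have hσ₀ : 1 - z.1 * A z.2 ≠ 0 := (sub_pos.2 hzA₁).ne'
    simp only [bernoulliDefect]
    field_simp
    ring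
  have h := isBigO_pow_sub_pow_mul hdiff (isBigO_div_sub_one hq hA hA₀ hr) hσ tendsto_fst_nhdsGT
    (n + 1)
  push_cast at h
  exact h.trans ((isBigO_mul_bernoulliDefect hq hA hA₀ hr).mul (isBigO_refl _ _))

/-- The correction `(n + 1) x d ^ 2 / 2` to the defect `d` keeps the derivative exact and matches
`(1 - x A) ^ (-(n + 1))` to one order in `x` more than `d` alone does; without it the moment with
`k = n + 2` would be out of reach. -/
theorem isBigO_sum_mul_integral (hT : 0 ≤ T) (hAT : A T = 0)
    (hret : ∀ᶠ x in 𝓝[>] 0, r x T = x) :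
    (fun x => ∑ k ∈ Finset.range (n + 3),
        (Nat.choose (n + k) n : ℝ) * x ^ k * ∫ t in 0..T, q t * A t ^ k)
      =O[𝓝[>] 0] (· ^ (n + 3)) := by
  have hA' : Continuous A := continuous_iff_continuousAt.2 fun t => (hA t).continuousAt
  let W (x t : ℝ) : ℝ := (x ^ (n + 1))⁻¹ *
      (bernoulliDefect A r x t + (n + 1) * x * bernoulliDefect A r x t ^ 2 / 2) +
    ∑ k ∈ Finset.range (n + 3), (Nat.choose (n + k) n : ℝ) * x ^ k * ∫ s in 0..t, q s * A s ^ k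
  have hW : (fun z : ℝ × ℝ => W z.1 z.2)
      =O[𝓝[>] 0 ×ˢ 𝓟 (Icc 0 T)] fun z => z.1 ^ (n + 3) := by
    refine isBigO_of_hasDerivAt (g := (· ^ (n + 3))) (f' := fun x t => q t *
      (∑ k ∈ Finset.range (n + 3), (Nat.choose (n + k) n : ℝ) * (x * A t) ^ k -
        (r x t / x) ^ (n + 1) * (1 + (n + 1) * (x * bernoulliDefect A r x t)))) ?_ ?_ ?_
    · filter_upwards [eventually_hasDerivAt_bernoulliDefect_add_sq hA hr] with x hx t ht
      have hint (k : ℕ) : HasDerivAt (fun t => ∫ s in 0..t, q s * A s ^ k) (q t * A t ^ k) t :=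
        (Continuous.integral_hasStrictDerivAt (by fun_prop) 0 t).hasDerivAt
      have hsum := HasDerivAt.fun_sum (u := Finset.range (n + 3)) fun k _ =>
        (hint k).const_mul ((Nat.choose (n + k) n : ℝ) * x ^ k)
      refine (((hx t ht).const_mul (x ^ (n + 1))⁻¹).add hsum).congr_deriv ?_
      rw [mul_sub, Finset.mul_sum, sub_eq_neg_add]
      congr 1
      · ring
      · exact Finset.sum_congr rfl fun k _ => by ring
    · filter_upwards [hr] with x hx
      simp [W, bernoulliDefect, hx.apply_zero, hA₀]
    · simpa using (isBigO_one_comp_snd hq isCompact_Icc).mul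
        ((isBigO_inv_one_sub_pow_sub_div_pow_mul hq hA hA₀ hr).sub
          (isBigO_inv_one_sub_mul_pow_sub_sum hA' isCompact_Icc n (n + 3)))
  have hend : Tendsto (fun x : ℝ => (x, T)) (𝓝[>] 0) (𝓝[>] 0 ×ˢ 𝓟 (Icc 0 T)) :=
    tendsto_id.prodMk (tendsto_principal.2 (.of_forall fun _ => right_mem_Icc.2 hT))
  refine (hW.comp_tendsto hend).congr' ?_ .rfl
  filter_upwards [hret] with x hx
  simp [W, bernoulliDefect, hx, hAT]

end Estimates

theorem integral_mul_pow_eq_zero_of_isSolutionNear (hq : Continuous q)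
    (hA : ∀ t, HasDerivAt A (p t) t) (hA₀ : A 0 = 0) (hT : 0 ≤ T) (hAT : A T = 0)
    (hr : ∀ᶠ x in 𝓝[>] 0, IsSolutionNear (abelField (n + 2) p q) T x (r x))
    (hret : ∀ᶠ x in 𝓝[>] 0, r x T = x) {k : ℕ} (hk : k < n + 3) :
    ∫ t in 0..T, q t * A t ^ k = 0 := by
  let c (k : ℕ) : ℝ := (Nat.choose (n + k) n : ℝ) * ∫ t in 0..T, q t * A t ^ k
  have hdvd : X ^ (n + 3) ∣ ∑ k ∈ Finset.range (n + 3), C (c k) * X ^ k := by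
    refine X_pow_dvd_of_isBigO (nhdsGT_le_nhdsNE 0) ?_
    refine (isBigO_sum_mul_integral hq hA hA₀ hr hT hAT hret).congr_left fun x => ?_
    simp only [eval_finsetSum, eval_mul, eval_C, eval_pow, eval_X, c]
    exact Finset.sum_congr rfl fun k _ => mul_right_comm _ _ _
  have hc : c k = 0 := by
    simpa [finsetSum_coeff, coeff_C_mul_X_pow, hk, -map_mul] using X_pow_dvd_iff.1 hdvd k hk
  exact (mul_eq_zero.1 hc).resolve_left (mod_cast (Nat.choose_pos (Nat.le_add_right n k)).ne')

theorem integral_mul_pow_eq_zero_of_hasCenterAtZero (hp : ContDiff ℝ 1 p) (hq : ContDiff ℝ 1 q)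
    (hA : ∀ t, HasDerivAt A (p t) t) (hA₀ : A 0 = 0) (hA₁ : A (2 * π) = 0)
    (hcenter : HasCenterAtZero (abelField (n + 2) p q)) {k : ℕ} (hk : k < n + 3) :
    ∫ t in 0..2 * π, q t * A t ^ k = 0 := by
  have hfield : abelField (n + 2) p q = fun t y => y ^ 2 * (p t + q t * y ^ (n + 1)) := by
    ext t y
    simp only [abelField]
    ring
  have hexists : ∀ᶠ x in 𝓝[>] 0, ∃ r, IsSolutionNear (abelField (n + 2) p q) (2 * π) x r := by
    rw [hfield]
    exact eventually_exists_isSolutionNear (by fun_prop) two_pi_pos.le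
  obtain ⟨r, hr⟩ := hexists.choice
  obtain ⟨ε, hε, hcenter⟩ := hcenter
  have hret : ∀ᶠ x in 𝓝[>] 0, r x (2 * π) = x := by
    filter_upwards [hr, Ioo_mem_nhdsGT hε] with x hx hxε
    have h₀ : |r x 0| < ε := by simpa [hx.apply_zero, abs_of_pos hxε.1] using hxε.2
    exact (hcenter (r x) h₀ hx.hasDerivAt).trans hx.apply_zero
  exact integral_mul_pow_eq_zero_of_isSolutionNear hq.continuous hA hA₀ two_pi_pos.le hA₁ hr hret hk

theorem integral_mul_eval_eq_zero_of_hasCenterAtZero (hp : ContDiff ℝ 1 p) (hq : ContDiff ℝ 1 q)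
    (hA : ∀ t, HasDerivAt A (p t) t) (hA₀ : A 0 = 0) (hA₁ : A (2 * π) = 0)
    (hcenter : HasCenterAtZero (abelField (n + 2) p q)) {Q : ℝ[X]} (hQ : Q.natDegree < n + 3) :
    ∫ t in 0..2 * π, q t * Q.eval (A t) = 0 := by
  have hA' : Continuous A := continuous_iff_continuousAt.2 fun t => (hA t).continuousAt
  have hq' := hq.continuous
  simp_rw [eval_eq_sum_range' hQ, Finset.mul_sum, mul_left_comm (q _)]
  rw [intervalIntegral.integral_finsetSum fun k _ =>
    Continuous.intervalIntegrable (by fun_prop) _ _]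
  refine Finset.sum_eq_zero fun k hk => ?_
  rw [intervalIntegral.integral_const_mul, integral_mul_pow_eq_zero_of_hasCenterAtZero hp hq hA hA₀
    hA₁ hcenter (Finset.mem_range.1 hk), mul_zero]

end Necessity

section Criterion

theorem odd_of_integral_mul_add_comp_neg_eq_zero {g : ℝ → ℝ} {a : ℝ} (ha : 0 < a)
    (hg : Continuous g) (hper : Periodic g (2 * a))
    (hint : ∫ v in (-a)..a, g v * (g v + g (-v)) = 0) : g.Odd := by
  have hreflect : ∫ v in (-a)..a, g (-v) * (g v + g (-v)) = 0 := by
    rw [← hint, ← neg_neg a, ← intervalIntegral.integral_comp_neg]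
    simp [add_comm]
  have hsq : ∫ v in (-a)..a, (g v + g (-v)) ^ 2 = 0 := by
    simp_rw [sq, add_mul]
    rw [intervalIntegral.integral_add, hint, hreflect, add_zero] <;>
      exact Continuous.intervalIntegrable (by fun_prop) _ _
  have hzero {v : ℝ} (hv : v ∈ Icc (-a) a) : g v + g (-v) = 0 := by
    by_contra hne
    exact hsq.not_gt <| intervalIntegral.integral_pos (by linarith) (by fun_prop)
      (fun _ _ => sq_nonneg _) ⟨v, hv, by positivity⟩
  have hper' : Periodic (fun v => g v + g (-v)) (2 * a) := fun v => by
    simp only [hper v, neg_add, ← sub_eq_add_neg, hper.sub_eq]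
  intro v
  obtain ⟨w, hw, hvw⟩ := hper'.exists_mem_Ico (by positivity) v (-a)
  have hw₀ := hzero (v := w) ⟨hw.1, by linarith [hw.2]⟩
  linarith [hvw.trans hw₀]

variable {n : ℕ} {p q : ℝ → ℝ} {k t₀ : ℝ} {Q : ℝ[X]}

theorem hasCenterAtZero_abelField_of_odd (hp : ContDiff ℝ 1 p) (hq : ContDiff ℝ 1 q)
    (hpper : Periodic p (2 * π)) (hqper : Periodic q (2 * π))
    (hpodd : Function.Odd fun v => p (t₀ + v)) (hqodd : Function.Odd fun v => q (t₀ + v)) :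
    HasCenterAtZero (abelField n p q) := by
  refine hasCenterAtZero_of_odd (c := t₀) ?_ (fun t => ?_) fun v => ?_
  · unfold abelField
    fun_prop
  · ext y
    simp only [abelField, hpper t, hqper t]
  · have hpv : p (t₀ + -v) = -p (t₀ + v) := hpodd v
    have hqv : q (t₀ + -v) = -q (t₀ + v) := hqodd v
    ext y
    simp only [abelField, hpv, hqv, Pi.neg_apply]
    ring

theorem integral_mul_eval_cos_eq_zero_of_hasCenterAtZero (hk : k ≠ 0)
    (hp : ∀ t, p t = k * sin (t₀ - t)) (hq : ContDiff ℝ 1 q) (hper : Periodic q (2 * π))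
    (hQ : Q.natDegree < n + 3) (hcenter : HasCenterAtZero (abelField (n + 2) p q)) :
    ∫ v in (-π)..π, q (t₀ + v) * Q.eval (cos v) = 0 := by
  have hp' : ContDiff ℝ 1 p := by
    rw [funext hp]
    fun_prop
  have hA (t : ℝ) : HasDerivAt (fun t => k * (cos (t - t₀) - cos t₀)) (p t) t := by
    have h := (((hasDerivAt_cos _).comp_sub_const t t₀).sub_const (cos t₀)).const_mul k
    refine h.congr_deriv ?_
    rw [hp, ← sin_neg, neg_sub]
  have hdeg : (Q.comp (C k⁻¹ * X + C (cos t₀))).natDegree < n + 3 := by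
    rwa [natDegree_comp, natDegree_linear (inv_ne_zero hk), mul_one]
  have hmoment := integral_mul_eval_eq_zero_of_hasCenterAtZero hp' hq hA (by simp)
    (by simp [cos_two_pi_sub]) hcenter hdeg
  have hperiodic : Periodic (fun t => q t * Q.eval (cos (t - t₀))) (2 * π) := fun t => by
    simp only [hper t, add_sub_right_comm, cos_add_two_pi]
  calc ∫ v in (-π)..π, q (t₀ + v) * Q.eval (cos v)
      = ∫ t in (t₀ - π)..(t₀ - π + 2 * π), q t * Q.eval (cos (t - t₀)) := by
        rw [show t₀ - π + 2 * π = t₀ + π by ring, sub_eq_add_neg,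
          ← intervalIntegral.integral_comp_add_left]
        simp only [add_sub_cancel_left]
    _ = ∫ t in 0..2 * π, q t * Q.eval (cos (t - t₀)) := by
        rw [hperiodic.intervalIntegral_add_eq _ 0, zero_add]
    _ = 0 := by simpa [hk] using hmoment

theorem hasCenterAtZero_abelField_iff_odd (hk : k ≠ 0) (hp : ∀ t, p t = k * sin (t₀ - t))
    (hq : ContDiff ℝ 1 q) (hper : Periodic q (2 * π)) (hQ : Q.natDegree < n + 3)
    (heven : ∀ v, q (t₀ + v) + q (t₀ - v) = Q.eval (cos v)) :
    HasCenterAtZero (abelField (n + 2) p q) ↔ Function.Odd fun v => q (t₀ + v) := by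
  refine ⟨fun hcenter => ?_, fun hodd => ?_⟩
  · refine odd_of_integral_mul_add_comp_neg_eq_zero pi_pos (by fun_prop)
      (fun v => by simp only [← add_assoc, hper (t₀ + v)]) ?_
    simp only [← sub_eq_add_neg, heven]
    exact integral_mul_eval_cos_eq_zero_of_hasCenterAtZero hk hp hq hper hQ hcenter
  · obtain rfl : p = _ := funext hp
    refine hasCenterAtZero_abelField_of_odd (by fun_prop) hq (fun t => ?_) hper (fun v => ?_) hodd
    · simp only [← sub_sub, sin_sub_two_pi]
    · simp

end Criterion

theorem exists_eq_mul_sin_and_eq_neg_mul_cos {a b : ℝ} (h : a ^ 2 + b ^ 2 ≠ 0) :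
    ∃ k t : ℝ, k ≠ 0 ∧ a = k * sin t ∧ b = -k * cos t := by
  let z : ℂ := ⟨-b, a⟩
  have hz : z ≠ 0 := fun hz => h <| by
    have hre : -b = 0 := congrArg Complex.re hz
    have him : a = 0 := congrArg Complex.im hz
    simp [neg_eq_zero.1 hre, him]
  exact ⟨‖z‖, z.arg, norm_ne_zero_iff.2 hz, z.norm_mul_sin_arg.symm, by simp [z]⟩

section Quintic

/-- The binary quintic form `Σ aⱼ x ^ (5 - j) y ^ j`. -/
def quinticForm (a : Fin 6 → ℝ) (x y : ℝ) : ℝ :=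
  a 0 * x ^ 5 + a 1 * x ^ 4 * y + a 2 * x ^ 3 * y ^ 2 + a 3 * x ^ 2 * y ^ 3 + a 4 * x * y ^ 4 +
    a 5 * y ^ 5

/-- Half the Laplacian of `quinticForm a`. -/
def quinticLaplacian (a : Fin 6 → ℝ) (x y : ℝ) : ℝ :=
  (10 * a 0 + a 2) * x ^ 3 + 3 * (2 * a 1 + a 3) * x ^ 2 * y + 3 * (a 2 + 2 * a 4) * x * y ^ 2 +
    (a 3 + 10 * a 5) * y ^ 3

/-- The bilaplacian of `quinticForm a`, divided by `24`. -/
def quinticBilaplacian (a : Fin 6 → ℝ) (x y : ℝ) : ℝ :=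
  (5 * a 0 + a 2 + a 4) * x + (a 1 + a 3 + 5 * a 5) * y

variable (a : Fin 6 → ℝ)

theorem quinticForm_mul (m x y : ℝ) :
    quinticForm a (m * x) (m * y) = m ^ 5 * quinticForm a x y := by
  simp only [quinticForm]
  ring

theorem quinticLaplacian_mul (m x y : ℝ) :
    quinticLaplacian a (m * x) (m * y) = m ^ 3 * quinticLaplacian a x y := by
  simp only [quinticLaplacian]
  ring

theorem quinticBilaplacian_mul (m x y : ℝ) :
    quinticBilaplacian a (m * x) (m * y) = m * quinticBilaplacian a x y := by
  simp only [quinticBilaplacian]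
  ring

theorem quinticForm_add_quinticForm_reflect (c s x y : ℝ) :
    quinticForm a (c * x - s * y) (s * x + c * y) + quinticForm a (c * x + s * y) (s * x - c * y) =
      2 * (quinticForm a c s * x * (x ^ 4 - 10 * x ^ 2 * y ^ 2 + 5 * y ^ 4) +
        (c ^ 2 + s ^ 2) * quinticLaplacian a c s * x * y ^ 2 * (x ^ 2 - y ^ 2) +
        (c ^ 2 + s ^ 2) ^ 2 * quinticBilaplacian a c s * x * y ^ 4) := by
  simp only [quinticForm, quinticLaplacian, quinticBilaplacian]
  ring

/-- The even part of `quinticForm a` on the unit circle about the angle `t`, doubled and expressed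
through the cosine. -/
noncomputable def quinticEvenPart (t : ℝ) : ℝ[X] :=
  C 2 * (C (quinticForm a (cos t) (sin t)) * X * (16 * X ^ 4 - 20 * X ^ 2 + 5) +
    C (quinticLaplacian a (cos t) (sin t)) * X * (1 - X ^ 2) * (2 * X ^ 2 - 1) +
    C (quinticBilaplacian a (cos t) (sin t)) * X * (1 - X ^ 2) ^ 2)

theorem natDegree_quinticEvenPart_le (t : ℝ) : (quinticEvenPart a t).natDegree ≤ 5 := by
  unfold quinticEvenPart
  compute_degree

theorem quinticForm_cos_sin_add_sub (t v : ℝ) :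
    quinticForm a (cos (t + v)) (sin (t + v)) + quinticForm a (cos (t - v)) (sin (t - v)) =
      (quinticEvenPart a t).eval (cos v) := by
  have hsin : sin v ^ 2 = 1 - cos v ^ 2 := sin_sq v
  rw [cos_add, sin_add, cos_sub, sin_sub, quinticForm_add_quinticForm_reflect, cos_sq_add_sin_sq,
    show sin v ^ 4 = (sin v ^ 2) ^ 2 by ring, hsin]
  simp only [quinticEvenPart, eval_mul, eval_add, eval_sub, eval_pow, eval_C, eval_X, eval_ofNat,
    eval_one]
  ring

theorem odd_quinticForm_cos_sin_iff (t : ℝ) :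
    (Function.Odd fun v => quinticForm a (cos (t + v)) (sin (t + v))) ↔
      quinticBilaplacian a (cos t) (sin t) = 0 ∧ quinticLaplacian a (cos t) (sin t) = 0 ∧
        quinticForm a (cos t) (sin t) = 0 := by
  have hodd : (Function.Odd fun v => quinticForm a (cos (t + v)) (sin (t + v))) ↔
      ∀ v, (quinticEvenPart a t).eval (cos v) = 0 := by
    refine forall_congr' fun v => ?_
    rw [← quinticForm_cos_sin_add_sub, eq_neg_iff_add_eq_zero, add_comm, sub_eq_add_neg]
  rw [hodd]
  constructor
  · intro h
    have heval {x : ℝ} (h₀ : -1 ≤ x) (h₁ : x ≤ 1) : (quinticEvenPart a t).eval x = 0 := by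
      simpa [cos_arccos h₀ h₁] using h (arccos x)
    have h₁ := heval (x := 1) (by norm_num) le_rfl
    have h₂ := heval (x := 1 / 2) (by norm_num) (by norm_num)
    have h₃ := heval (x := 1 / 4) (by norm_num) (by norm_num)
    simp only [quinticEvenPart, eval_mul, eval_add, eval_sub, eval_pow, eval_C, eval_X, eval_ofNat,
      eval_one] at h₁ h₂ h₃
    exact ⟨by linarith, by linarith, by linarith⟩
  · rintro ⟨h₄, h₂, h₀⟩ v
    simp [quinticEvenPart, h₄, h₂, h₀]

end Quintic

/-- Corollary 2.7: center conditions for `dr/dθ = r (P₁ r + P₅ r⁵)`. -/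
theorem sextic_center_conditions
    (p10 p01 p50 p41 p32 p23 p14 p05 : ℝ) (h : p10 ^ 2 + p01 ^ 2 ≠ 0)
    (P1 P5 : ℝ → ℝ)
    (hP1 : ∀ θ, P1 θ = p10 * Real.cos θ + p01 * Real.sin θ)
    (hP5 : ∀ θ, P5 θ = p50 * Real.cos θ ^ 5 + p41 * Real.cos θ ^ 4 * Real.sin θ +
      p32 * Real.cos θ ^ 3 * Real.sin θ ^ 2 + p23 * Real.cos θ ^ 2 * Real.sin θ ^ 3 +
      p14 * Real.cos θ * Real.sin θ ^ 4 + p05 * Real.sin θ ^ 5) :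
    HasCenterAtZero (fun θ r => r * (P1 θ * r + P5 θ * r ^ 5)) ↔
      (p01 * (5 * p50 + p32 + p14) = p10 * (5 * p05 + p23 + p41) ∧
       p10 ^ 3 * (p23 + 10 * p05) - 3 * p10 ^ 2 * p01 * (2 * p14 + p32) +
         3 * p10 * p01 ^ 2 * (p23 + 2 * p41) - p01 ^ 3 * (p32 + 10 * p50) = 0 ∧
       p50 * p01 ^ 5 - p41 * p01 ^ 4 * p10 + p32 * p01 ^ 3 * p10 ^ 2 -
         p23 * p01 ^ 2 * p10 ^ 3 + p14 * p01 * p10 ^ 4 - p05 * p10 ^ 5 = 0) := by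
  let a : Fin 6 → ℝ := ![p50, p41, p32, p23, p14, p05]
  obtain ⟨k, t, hk, hp10, hp01⟩ := exists_eq_mul_sin_and_eq_neg_mul_cos h
  have hP1' (θ : ℝ) : P1 θ = k * sin (t - θ) := by
    rw [hP1, hp10, hp01, sin_sub]
    ring
  obtain rfl : P5 = fun θ => quinticForm a (cos θ) (sin θ) := funext hP5
  calc HasCenterAtZero (abelField 5 P1 fun θ => quinticForm a (cos θ) (sin θ))
      ↔ Function.Odd fun v => quinticForm a (cos (t + v)) (sin (t + v)) :=
        hasCenterAtZero_abelField_iff_odd (n := 3) hk hP1' (by unfold quinticForm; fun_prop)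
          (fun θ => by simp only [cos_add_two_pi, sin_add_two_pi])
          (Nat.lt_succ_of_le (natDegree_quinticEvenPart_le a t)) (quinticForm_cos_sin_add_sub a t)
    _ ↔ _ := odd_quinticForm_cos_sin_iff a t
    -- `(p01, -p10)` spans the zero line of `P₁`, which is the axis of the reflection `t ± v`.
    _ ↔ quinticBilaplacian a p01 (-p10) = 0 ∧ quinticLaplacian a p01 (-p10) = 0 ∧
        quinticForm a p01 (-p10) = 0 := by
      simp [hp10, hp01, ← neg_mul, quinticForm_mul, quinticLaplacian_mul, quinticBilaplacian_mul,
        hk]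
    _ ↔ _ := by
      simp only [a, quinticBilaplacian, quinticLaplacian, quinticForm, Matrix.cons_val]
      constructor <;> rintro ⟨h₄, h₂, h₀⟩ <;> refine ⟨?_, ?_, ?_⟩ <;> linarith
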